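/- For a Clifford matrix A ∈ SL₂$ the following are equivalent: (i) A ≠ 1 and (A − 1)² = 0 (1 the identity matrix); (ii) there exists B ∈ SL₂$ with AB = B P₀, where P₀ = [[1,1],[0,1]] (i.e. A is conjugate to P₀ in SL₂$); (iii) A = [[1 − ac*, aa*],[−cc*, 1 + ca*]] for some quaternionic spinor (a,c). -/

import Mathlib

/-!
For a Clifford matrix `B` with columns `(a, c)` and `(b, d)`, the matrix
`[[d*, -b*], [-c*, a*]]` is its inverse (`cliffordInv_mul`): the off-diagonal entries of the product
vanish because `(a, c)` is a spinor exactly when `a* c = c* a`. Conjugating `P₀ = 1 + E₁₂` by `B`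
therefore gives `1 + (a, c)ᵀ (-c*, a*)`, which is the matrix in (iii) (`parabolicOf`); it depends only
on the first column of `B`. This gives (ii) → (iii), and (iii) → (ii) follows by completing the spinor
`(a, c)` to a Clifford matrix with second column `(-c', a') / (|a|² + |c|²)`. The perturbation
`(a, c)ᵀ (-c*, a*)` squares to zero since `-c* a + a* c = 0`, which gives (iii) → (i).

For (i) → (iii), `(A - 1)² = 0` says `A⁻¹ = 2 - A`, and comparison with the explicit inverse shows
`A - 1 = [[n, β], [γ, -n*]]` with `β`, `γ` paravectors. Every paravector is the square of a paravector
(`exists_paravector_sqrt`), and the spinor is then found explicitly: if `β ≠ 0`, take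
`a² = β` and `c* = -a⁻¹ n`; if `β = 0`, then `n = 0`, and `a = 0`, `c² = -γ` works.
-/


open Quaternion

noncomputable section

/-- The involution `q* = a + bi + cj - dk` on quaternions (Clifford reversion). -/
def qstar (q : ℍ[ℝ]) : ℍ[ℝ] := ⟨q.re, q.imI, q.imJ, -q.imK⟩

/-- The involution `q' = a - bi - cj + dk` on quaternions. -/
def qprime (q : ℍ[ℝ]) : ℍ[ℝ] := ⟨q.re, -q.imI, -q.imJ, q.imK⟩

/-- A paravector is an element of `ℝ + ℝi + ℝj`, i.e. a quaternion with zero `k`-component. -/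
def IsParavector (q : ℍ[ℝ]) : Prop := q.imK = 0

/-- The quaternion `k`. -/
def qk : ℍ[ℝ] := ⟨0, 0, 0, 1⟩

/-- A quaternionic spinor: a pair `(ξ, η) ≠ (0,0)` with `ξ * conj η` a paravector. -/
def IsSpinor (κ : ℍ[ℝ] × ℍ[ℝ]) : Prop := κ ≠ 0 ∧ IsParavector (κ.1 * star κ.2)

/-- The bracket `{κ₁, κ₂} = ξ₁* η₂ − η₁* ξ₂`. -/
def bracket (κ₁ κ₂ : ℍ[ℝ] × ℍ[ℝ]) : ℍ[ℝ] := qstar κ₁.1 * κ₂.2 - qstar κ₁.2 * κ₂.1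

/-- Right multiplication `κ x = (ξ x, η x)`. -/
def rmul (κ : ℍ[ℝ] × ℍ[ℝ]) (x : ℍ[ℝ]) : ℍ[ℝ] × ℍ[ℝ] := (κ.1 * x, κ.2 * x)

/-- The complementary pair `κ̌ = (η', −ξ')`. -/
def qcheck (κ : ℍ[ℝ] × ℍ[ℝ]) : ℍ[ℝ] × ℍ[ℝ] := (qprime κ.2, -qprime κ.1)

/-- The real inner product on `ℍ²`: `⟨κ₁, κ₂⟩ = Re (ξ₁ ξ̄₂ + η₁ η̄₂)`. -/
def qinner (κ₁ κ₂ : ℍ[ℝ] × ℍ[ℝ]) : ℝ := (κ₁.1 * star κ₂.1 + κ₁.2 * star κ₂.2).re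

/-- The squared norm `|κ|² = |ξ|² + |η|²` on `ℍ²`. -/
def qnsq (κ : ℍ[ℝ] × ℍ[ℝ]) : ℝ := Quaternion.normSq κ.1 + Quaternion.normSq κ.2

/-- The pseudo-determinant of a 2×2 quaternionic matrix: `pdet [[a,b],[c,d]] = a* d − c* b`. -/
def pdet (A : Matrix (Fin 2) (Fin 2) ℍ[ℝ]) : ℍ[ℝ] := qstar (A 0 0) * A 1 1 - qstar (A 1 0) * A 0 1

/-- A Clifford matrix: columns are quaternionic spinors and the pseudo-determinant is 1. -/
def IsClifford (A : Matrix (Fin 2) (Fin 2) ℍ[ℝ]) : Prop :=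
  IsSpinor (A 0 0, A 1 0) ∧ IsSpinor (A 0 1, A 1 1) ∧ pdet A = 1

/-- Matrix-vector action of a 2×2 quaternionic matrix on a column vector in `ℍ²`. -/
def mact (A : Matrix (Fin 2) (Fin 2) ℍ[ℝ]) (κ : ℍ[ℝ] × ℍ[ℝ]) : ℍ[ℝ] × ℍ[ℝ] :=
  (A 0 0 * κ.1 + A 0 1 * κ.2, A 1 0 * κ.1 + A 1 1 * κ.2)

/-! ### The reversion `q*` -/

@[simp] lemma re_qstar (q : ℍ[ℝ]) : (qstar q).re = q.re := rfl

@[simp] lemma imI_qstar (q : ℍ[ℝ]) : (qstar q).imI = q.imI := rfl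

@[simp] lemma imJ_qstar (q : ℍ[ℝ]) : (qstar q).imJ = q.imJ := rfl

@[simp] lemma imK_qstar (q : ℍ[ℝ]) : (qstar q).imK = -q.imK := rfl

@[simp] lemma re_qprime (q : ℍ[ℝ]) : (qprime q).re = q.re := rfl

@[simp] lemma imI_qprime (q : ℍ[ℝ]) : (qprime q).imI = -q.imI := rfl

@[simp] lemma imJ_qprime (q : ℍ[ℝ]) : (qprime q).imJ = -q.imJ := rfl

@[simp] lemma imK_qprime (q : ℍ[ℝ]) : (qprime q).imK = q.imK := rfl

lemma qstar_mul (x y : ℍ[ℝ]) : qstar (x * y) = qstar y * qstar x := by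
  ext <;> simp <;> ring

lemma qstar_sub (x y : ℍ[ℝ]) : qstar (x - y) = qstar x - qstar y := by
  ext <;> simp <;> ring

lemma qstar_neg (x : ℍ[ℝ]) : qstar (-x) = -qstar x := by
  ext <;> simp

lemma qstar_qstar (x : ℍ[ℝ]) : qstar (qstar x) = x := by
  ext <;> simp

lemma qstar_one : qstar 1 = 1 := by
  ext <;> simp

lemma qstar_zero : qstar 0 = 0 := by
  ext <;> simp

lemma qstar_eq_zero {x : ℍ[ℝ]} (h : qstar x = 0) : x = 0 := by
  rw [← qstar_qstar x, h, qstar_zero]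

lemma qstar_eq_self {x : ℍ[ℝ]} (h : IsParavector x) : qstar x = x := by
  unfold IsParavector at h
  ext <;> simp [h]

lemma qstar_inv_eq_self {x : ℍ[ℝ]} (h : qstar x = x) (hx : x ≠ 0) : qstar x⁻¹ = x⁻¹ := by
  apply eq_inv_of_mul_eq_one_left
  calc qstar x⁻¹ * x = qstar (x * x⁻¹) := by rw [qstar_mul, h]
    _ = 1 := by rw [mul_inv_cancel₀ hx, qstar_one]

/-- The `k`-components of `a c̄` and `a* c` are opposite, and `c* a = (a* c)*`, so the paravector
condition on `a c̄` is the vanishing of the bracket of `(a, c)` with itself. -/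
lemma isParavector_mul_star_iff (a c : ℍ[ℝ]) :
    IsParavector (a * star c) ↔ qstar a * c = qstar c * a := by
  constructor
  · intro h
    simp [IsParavector] at h
    ext <;> simp <;> linarith
  · intro h
    have h' := congrArg QuaternionAlgebra.imK h
    simp at h'
    simp [IsParavector]
    linarith

/-- Each paravector `x + yi + zj` lies in a copy of `ℂ` made of paravectors, so it has a square root
there. -/
lemma exists_paravector_sqrt (q : ℍ[ℝ]) (hq : qstar q = q) :
    ∃ s : ℍ[ℝ], qstar s = s ∧ s * s = q := by
  obtain ⟨x, y, z, w⟩ := q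
  have hw : w = 0 := by
    have h := congrArg QuaternionAlgebra.imK hq
    change -w = w at h
    linarith
  subst hw
  set r := Real.sqrt (x ^ 2 + y ^ 2 + z ^ 2) with hr
  have hr2 : r ^ 2 = x ^ 2 + y ^ 2 + z ^ 2 := Real.sq_sqrt (by positivity)
  have hr0 : 0 ≤ r := Real.sqrt_nonneg _
  have hxr : 0 ≤ x + r := by nlinarith [sq_nonneg y, sq_nonneg z]
  rcases hxr.eq_or_lt with h | h
  · -- `q` is a nonpositive real, with square root `√(-x) i`.
    have hyz : y ^ 2 + z ^ 2 = 0 := by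
      have : r = -x := by linarith
      rw [this] at hr2
      linarith
    have hy : y = 0 := by nlinarith [sq_nonneg y, sq_nonneg z]
    have hz : z = 0 := by nlinarith [sq_nonneg y, sq_nonneg z]
    subst hy hz
    obtain ⟨s, h1, h2, h3, h4⟩ : ∃ s : ℍ[ℝ],
        s.re = 0 ∧ s.imI = Real.sqrt (-x) ∧ s.imJ = 0 ∧ s.imK = 0 :=
      ⟨⟨0, Real.sqrt (-x), 0, 0⟩, rfl, rfl, rfl, rfl⟩
    refine ⟨s, by ext <;> simp [h4], ?_⟩
    have := Real.mul_self_sqrt (show 0 ≤ -x by linarith)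
    ext <;> simp [h1, h2, h3, h4, this]
  · -- The half-angle formula: `u` is the real part of the principal square root.
    set u := Real.sqrt ((x + r) / 2) with hu
    have hu2 : u ^ 2 = (x + r) / 2 := Real.sq_sqrt (by positivity)
    have hu0 : 0 < u := Real.sqrt_pos.mpr (by positivity)
    obtain ⟨s, h1, h2, h3, h4⟩ : ∃ s : ℍ[ℝ],
        s.re = u ∧ s.imI = y / (2 * u) ∧ s.imJ = z / (2 * u) ∧ s.imK = 0 :=
      ⟨⟨u, y / (2 * u), z / (2 * u), 0⟩, rfl, rfl, rfl, rfl⟩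
    refine ⟨s, by ext <;> simp [h4], ?_⟩
    have hre : u * u - y / (2 * u) * (y / (2 * u)) - z / (2 * u) * (z / (2 * u)) = x := by
      field_simp
      have : r = 2 * u ^ 2 - x := by linarith
      rw [this] at hr2
      nlinarith
    ext
    · simpa [h1, h2, h3, h4] using hre
    · simp [h1, h2, h3, h4]
      field_simp
      ring
    · simp [h1, h2, h3, h4]
      field_simp
      ring
    · simp [h1, h2, h3, h4]
      ring

/-! ### Inverses and completions of Clifford matrices -/

/-- The inverse `[[d*, -b*], [-c*, a*]]` of a Clifford matrix `[[a, b], [c, d]]`. -/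
def cliffordInv (B : Matrix (Fin 2) (Fin 2) ℍ[ℝ]) : Matrix (Fin 2) (Fin 2) ℍ[ℝ] :=
  !![qstar (B 1 1), -qstar (B 0 1); -qstar (B 1 0), qstar (B 0 0)]

lemma cliffordInv_mul {B : Matrix (Fin 2) (Fin 2) ℍ[ℝ]} (hB : IsClifford B) :
    cliffordInv B * B = 1 := by
  obtain ⟨⟨-, h1⟩, ⟨-, h2⟩, h3⟩ := hB
  rw [isParavector_mul_star_iff] at h1 h2
  simp only [pdet] at h3 h1 h2
  have h4 := congrArg qstar h3
  rw [qstar_sub, qstar_mul, qstar_mul, qstar_qstar, qstar_qstar, qstar_one] at h4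
  ext1 i j
  fin_cases i <;> fin_cases j <;> simp [cliffordInv, Matrix.mul_apply, Fin.sum_univ_two]
  · rw [← h4]; abel
  · rw [h2]; abel
  · rw [h1]; abel
  · rw [← h3]; abel

lemma mul_cliffordInv {B : Matrix (Fin 2) (Fin 2) ℍ[ℝ]} (hB : IsClifford B) :
    B * cliffordInv B = 1 :=
  mul_eq_one_comm.mp (cliffordInv_mul hB)

/-- The matrix `1 + (a, c)ᵀ (-c*, a*)`. -/
def parabolicOf (a c : ℍ[ℝ]) : Matrix (Fin 2) (Fin 2) ℍ[ℝ] :=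
  !![1 - a * qstar c, a * qstar a; -(c * qstar c), 1 + c * qstar a]

/-- The conjugation identity `parabolicOf a c = B P₀ B⁻¹`, for `(a, c)` the first column of `B`. -/
lemma parabolicOf_mul {B : Matrix (Fin 2) (Fin 2) ℍ[ℝ]} (hB : IsClifford B) :
    parabolicOf (B 0 0) (B 1 0) * B = B * !![1, 1; 0, 1] := by
  obtain ⟨⟨-, h1⟩, -, h3⟩ := hB
  rw [isParavector_mul_star_iff] at h1
  simp only [pdet] at h3 h1
  have key1 : ∀ x : ℍ[ℝ], x * (qstar (B 0 0) * B 1 0) = x * (qstar (B 1 0) * B 0 0) :=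
    fun x => by rw [h1]
  have key2 : ∀ x : ℍ[ℝ], x * (qstar (B 0 0) * B 1 1) - x * (qstar (B 1 0) * B 0 1) = x :=
    fun x => by rw [← mul_sub, h3, mul_one]
  ext1 i j
  fin_cases i <;> fin_cases j <;>
    simp [parabolicOf, Matrix.mul_apply, Fin.sum_univ_two, sub_mul, add_mul, mul_assoc, key1]
  · conv_rhs => rw [← key2 (B 0 0)]
    abel
  · conv_rhs => rw [← key2 (B 1 0)]
    abel

/-- A spinor `(a, c)` is the first column of a Clifford matrix, with second column
`(-c', a') / (|a|² + |c|²)`. -/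
lemma exists_isClifford_of_isSpinor {a c : ℍ[ℝ]} (h : IsSpinor (a, c)) :
    ∃ B : Matrix (Fin 2) (Fin 2) ℍ[ℝ], IsClifford B ∧ B 0 0 = a ∧ B 1 0 = c := by
  set N : ℝ := normSq a + normSq c with hN
  have hN0 : N ≠ 0 := by
    intro h0
    have ha : normSq a = 0 := by linarith [normSq_nonneg (a := a), normSq_nonneg (a := c)]
    have hc : normSq c = 0 := by linarith [normSq_nonneg (a := a), normSq_nonneg (a := c)]
    rw [normSq_eq_zero] at ha hc
    exact h.1 (by rw [ha, hc]; rfl)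
  have hdet : qstar a * (N⁻¹ • qprime a) - qstar c * -(N⁻¹ • qprime c) = 1 := by
    have : qstar a * qprime a + qstar c * qprime c = N • (1 : ℍ[ℝ]) := by
      ext <;> simp [hN, normSq_def'] <;> ring
    rw [mul_neg, sub_neg_eq_add, mul_smul_comm, mul_smul_comm, ← smul_add, this, smul_smul,
      inv_mul_cancel₀ hN0, one_smul]
  refine ⟨!![a, -(N⁻¹ • qprime c); c, N⁻¹ • qprime a], ⟨by simpa using h, ⟨?_, ?_⟩, ?_⟩, ?_, ?_⟩
  · intro h0
    simp only [Matrix.of_apply, Matrix.cons_val', Matrix.cons_val_zero, Matrix.cons_val_one,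
      Matrix.cons_val_fin_one, Prod.mk_eq_zero] at h0
    rw [h0.1, h0.2] at hdet
    simp at hdet
  · have h2 := h.2
    simp [IsParavector] at h2
    simp [IsParavector]
    right
    linarith
  · simpa [pdet] using hdet
  · simp
  · simp

/-! ### Parabolic matrices -/

lemma parabolicOf_ne_one {a c : ℍ[ℝ]} (h : IsSpinor (a, c)) : parabolicOf a c ≠ 1 := by
  intro h1
  have h01 := congrFun (congrFun h1 0) 1
  have h10 := congrFun (congrFun h1 1) 0
  simp [parabolicOf] at h01 h10
  have ha : a = 0 := h01.elim id qstar_eq_zero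
  have hc : c = 0 := h10.elim id qstar_eq_zero
  exact h.1 (by rw [ha, hc]; rfl)

lemma parabolicOf_sub_one_sq {a c : ℍ[ℝ]} (h : IsSpinor (a, c)) :
    (parabolicOf a c - 1) ^ 2 = 0 := by
  have h1 := (isParavector_mul_star_iff a c).mp h.2
  have key : ∀ x y : ℍ[ℝ], x * (qstar a * (c * y)) = x * (qstar c * (a * y)) :=
    fun x y => by rw [← mul_assoc (qstar a), h1, mul_assoc]
  rw [pow_two]
  ext1 i j
  fin_cases i <;> fin_cases j <;>
    simp [parabolicOf, Matrix.mul_apply, Fin.sum_univ_two, mul_assoc, key]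

/-- The vanishing of `(A - 1)²` forces `A⁻¹ = 2 - A`. -/
lemma cliffordInv_eq_of_sub_one_sq {A : Matrix (Fin 2) (Fin 2) ℍ[ℝ]} (hA : IsClifford A)
    (h : (A - 1) ^ 2 = 0) : cliffordInv A = 1 - (A - 1) := by
  have h1 : A * (1 - (A - 1)) = 1 := by
    have : A * (1 - (A - 1)) = 1 - (A - 1) ^ 2 := by noncomm_ring
    rw [this, h, sub_zero]
  calc cliffordInv A = cliffordInv A * (A * (1 - (A - 1))) := by rw [h1, mul_one]
    _ = 1 - (A - 1) := by rw [← mul_assoc, cliffordInv_mul hA, one_mul]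

/-- A nonzero square-zero matrix `[[n, β], [γ, -n*]]` with paravectors `β`, `γ` has the form
`(a, c)ᵀ (-c*, a*)` for a spinor `(a, c)`. -/
lemma exists_spinor_of_sq_zero {n β γ : ℍ[ℝ]} (hβ : qstar β = β) (hγ : qstar γ = γ)
    (h00 : n * n + β * γ = 0) (h01 : n * β = β * qstar n) (hne : β = 0 → n = 0 → γ ≠ 0) :
    ∃ a c : ℍ[ℝ], IsSpinor (a, c) ∧ n = -(a * qstar c) ∧ β = a * qstar a ∧
      γ = -(c * qstar c) := by
  by_cases hb : β = 0
  · subst hb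
    have hn : n = 0 := by simpa using h00
    subst hn
    obtain ⟨s, hs, hss⟩ := exists_paravector_sqrt (-γ) (by rw [qstar_neg, hγ])
    refine ⟨0, s, ⟨?_, ?_⟩, by simp, by simp, by rw [hs, hss, neg_neg]⟩
    · intro h0
      have h2 : s = 0 := congrArg Prod.snd h0
      rw [h2] at hss
      exact hne rfl rfl (by simpa using hss.symm)
    · simp [IsParavector]
  · obtain ⟨s, hs, hss⟩ := exists_paravector_sqrt β hβ
    have hs0 : s ≠ 0 := by
      rintro rfl
      exact hb (by simpa using hss.symm)
    have hsi : qstar s⁻¹ = s⁻¹ := qstar_inv_eq_self hs hs0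
    have hc : qstar (-(qstar n * s⁻¹)) = -(s⁻¹ * n) := by
      rw [qstar_neg, qstar_mul, hsi, qstar_qstar]
    have hconj : qstar n * β⁻¹ = β⁻¹ * n := by
      rw [mul_inv_eq_iff_eq_mul₀ hb, mul_assoc, h01, inv_mul_cancel_left₀ hb]
    refine ⟨s, -(qstar n * s⁻¹), ⟨?_, ?_⟩, ?_, by rw [hs, hss], ?_⟩
    · intro h0
      exact hs0 (congrArg Prod.fst h0)
    · rw [isParavector_mul_star_iff, hc, hs]
      -- This is `s² n* = n s²`, multiplied by `s⁻¹` on both sides.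
      have e : s * qstar n * s⁻¹ = s⁻¹ * n * s := by
        rw [mul_inv_eq_iff_eq_mul₀ hs0, mul_assoc, hss, mul_assoc, h01, ← hss,
          mul_assoc, inv_mul_cancel_left₀ hs0]
      rw [mul_neg, neg_mul, ← mul_assoc, e]
    · rw [hc, mul_neg, neg_neg, mul_inv_cancel_left₀ hs0]
    · rw [hc, neg_mul_neg]
      have e : qstar n * s⁻¹ * (s⁻¹ * n) = β⁻¹ * (n * n) := by
        rw [← mul_assoc (β⁻¹), ← hconj, ← hss, mul_inv_rev]
        simp only [mul_assoc]
      rw [e, eq_neg_of_add_eq_zero_left h00, mul_neg, inv_mul_cancel_left₀ hb, neg_neg]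

/-- The comparison of `A⁻¹ = 2 - A` with `cliffordInv A` entry by entry puts `A - 1` in the shape
required by `exists_spinor_of_sq_zero`. -/
lemma exists_spinor_of_parabolic {A : Matrix (Fin 2) (Fin 2) ℍ[ℝ]} (hA : IsClifford A)
    (hne : A ≠ 1) (h : (A - 1) ^ 2 = 0) :
    ∃ a c : ℍ[ℝ], IsSpinor (a, c) ∧ A = parabolicOf a c := by
  have hinv := cliffordInv_eq_of_sub_one_sq hA h
  have i01 := congrFun (congrFun hinv 0) 1
  have i10 := congrFun (congrFun hinv 1) 0
  have i11 := congrFun (congrFun hinv 1) 1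
  simp [cliffordInv] at i01 i10 i11
  have hn : qstar (A 0 0 - 1) = -(A 1 1 - 1) := by
    rw [qstar_sub, qstar_one, i11]; abel
  rw [pow_two] at h
  have s00 := congrFun (congrFun h 0) 0
  have s01 := congrFun (congrFun h 0) 1
  simp [Matrix.mul_apply, Fin.sum_univ_two] at s00 s01
  have hD : A 1 1 = 1 - qstar (A 0 0 - 1) := by rw [hn]; abel
  obtain ⟨a, c, hs, h1, h2, h3⟩ := exists_spinor_of_sq_zero (n := A 0 0 - 1) i01 i10 s00
    (by rw [hn, mul_neg]; exact eq_neg_of_add_eq_zero_left s01)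
    (by
      intro hb hn0 hc
      apply hne
      rw [hn0, qstar_zero, sub_zero] at hD
      ext1 i j
      fin_cases i <;> fin_cases j
      · simpa using sub_eq_zero.mp hn0
      · simpa using hb
      · simpa using hc
      · simpa using hD)
  refine ⟨a, c, hs, ?_⟩
  rw [h1, qstar_neg, qstar_mul, qstar_qstar, sub_neg_eq_add] at hD
  have hA00 : A 0 0 = 1 - a * qstar c := by rw [sub_eq_add_neg, ← h1]; abel
  ext1 i j
  fin_cases i <;> fin_cases j
  · simpa [parabolicOf] using hA00
  · simpa [parabolicOf] using h2
  · simpa [parabolicOf] using h3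
  · simpa [parabolicOf] using hD

/-- For a Clifford matrix `A` the following are equivalent:
(i) `A ≠ 1` and `(A − 1)² = 0`;
(ii) `A` is conjugate in `SL₂$` to `P₀ = [[1,1],[0,1]]`;
(iii) `A = [[1 − ac*, aa*],[−cc*, 1 + ca*]]` for some quaternionic spinor `(a,c)`. -/
theorem parabolic_conditions (A : Matrix (Fin 2) (Fin 2) ℍ[ℝ]) (hA : IsClifford A) :
    ((A ≠ 1 ∧ (A - 1) ^ 2 = 0) ↔
      (∃ B : Matrix (Fin 2) (Fin 2) ℍ[ℝ], IsClifford B ∧ A * B = B * !![1, 1; 0, 1])) ∧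
    ((∃ B : Matrix (Fin 2) (Fin 2) ℍ[ℝ], IsClifford B ∧ A * B = B * !![1, 1; 0, 1]) ↔
      (∃ a c : ℍ[ℝ], IsSpinor (a, c) ∧
        A = !![1 - a * qstar c, a * qstar a; -(c * qstar c), 1 + c * qstar a])) := by
  have h23 : (∃ B : Matrix (Fin 2) (Fin 2) ℍ[ℝ], IsClifford B ∧ A * B = B * !![1, 1; 0, 1]) ↔
      ∃ a c : ℍ[ℝ], IsSpinor (a, c) ∧ A = parabolicOf a c := by
    constructor
    · rintro ⟨B, hB, hAB⟩
      refine ⟨B 0 0, B 1 0, hB.1, ?_⟩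
      rw [← parabolicOf_mul hB] at hAB
      have h := congrArg (· * cliffordInv B) hAB
      simpa only [mul_assoc, mul_cliffordInv hB, mul_one] using h
    · rintro ⟨a, c, hs, rfl⟩
      obtain ⟨B, hB, rfl, rfl⟩ := exists_isClifford_of_isSpinor hs
      exact ⟨B, hB, parabolicOf_mul hB⟩
  have h13 : (A ≠ 1 ∧ (A - 1) ^ 2 = 0) ↔
      ∃ a c : ℍ[ℝ], IsSpinor (a, c) ∧ A = parabolicOf a c := by
    constructor
    · rintro ⟨hne, h⟩
      exact exists_spinor_of_parabolic hA hne h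
    · rintro ⟨a, c, hs, rfl⟩
      exact ⟨parabolicOf_ne_one hs, parabolicOf_sub_one_sq hs⟩
  exact ⟨h13.trans h23.symm, h23⟩
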